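/- arXiv:1107.0557 — 3 statements merged into one kernel-verified Lean document; each statement's English description precedes it below -/
import Mathlib

section
/- Let R be a ring and M a right R-module. The functor Ext¹_R(M, −) commutes with all inverse limits (i.e., for every inverse system of R-modules the canonical map Ext¹_R(M, lim M_i) → lim Ext¹_R(M, M_i) is an isomorphism) if and only if M is projective. -/
open CategoryTheory CategoryTheory.Limits Opposite

noncomputable section

/-- The category of right `R`-modules. -/
abbrev RMod (R : Type) [Ring R] := ModuleCat.{0} Rᵐᵒᵖ

/-- `R` as a right module over itself. -/
abbrev regR (R : Type) [Ring R] : RMod R := ModuleCat.of Rᵐᵒᵖ R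

/-- The covariant functor `Ext¹_R(M, -)` (more generally `Extⁿ_R(M, -)`). -/
abbrev extFun (R : Type) [Ring R] (n : ℕ) (M : RMod R) : RMod R ⥤ ModuleCat ℤ :=
  (Ext ℤ (RMod R) n).obj (op M)

/-- `Ext¹_R(M,-)` commutes with direct limits (direct systems over directed sets). -/
def CommutesWithDirectLimits (R : Type) [Ring R] (M : RMod R) : Prop :=
  ∀ (J : Type) [Preorder J] [IsDirected J (· ≤ ·)] [Nonempty J],
    PreservesColimitsOfShape J (extFun R 1 M)

/-- `Ext¹_R(M,-)` commutes with direct sums. -/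
def CommutesWithDirectSums (R : Type) [Ring R] (M : RMod R) : Prop :=
  ∀ (ι : Type), PreservesColimitsOfShape (Discrete ι) (extFun R 1 M)

/-- `Extⁿ_R(M,-)` commutes with direct sums of copies of `R`: the canonical map
`Extⁿ_R(M,R)^{(ι)} → Extⁿ_R(M,R^{(ι)})` is an isomorphism for every index set `ι`. -/
def CommutesWithSumsOfR (R : Type) [Ring R] (n : ℕ) (M : RMod R) : Prop :=
  ∀ (ι : Type), IsIso (Sigma.desc
    (fun i : ι => (extFun R n M).map (Sigma.ι (fun _ : ι => regR R) i)))

/-- A module `K` is small iff `Hom_R(K,-)` commutes with direct sums. -/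
def IsSmallModule (R : Type) [Ring R] (K : RMod R) : Prop :=
  ∀ (ι : Type), PreservesColimitsOfShape (Discrete ι) (preadditiveCoyoneda.obj (op K))

/-- `M` has a short exact sequence `0 → K → P → M → 0` with `P` projective and `K`
satisfying the property `Q` (e.g. `M` is fp-Ω¹, fg-Ω¹ or small-Ω¹). -/
def IsOmega1 (R : Type) [Ring R] (Q : RMod R → Prop) (M : RMod R) : Prop :=
  ∃ (K P : RMod R) (i : K ⟶ P) (p : P ⟶ M) (w : i ≫ p = 0),
    Mono i ∧ Epi p ∧ (ShortComplex.mk i p w).Exact ∧ Projective P ∧ Q K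

/-- `M` has projective dimension at most 1. -/
def HasProjDimLE1 (R : Type) [Ring R] (M : RMod R) : Prop :=
  ∃ (P₁ P₀ : RMod R) (f : P₁ ⟶ P₀) (p : P₀ ⟶ M) (w : f ≫ p = 0),
    Projective P₁ ∧ Projective P₀ ∧ Mono f ∧ Epi p ∧ (ShortComplex.mk f p w).Exact

/-- `M` is `FP₂`: it admits a projective resolution which is finitely generated in
dimensions `0`, `1` and `2`. -/
def IsFP2 (R : Type) [Ring R] (M : RMod R) : Prop :=
  ∃ (P₂ P₁ P₀ : RMod R) (d₂ : P₂ ⟶ P₁) (d₁ : P₁ ⟶ P₀) (p : P₀ ⟶ M)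
    (w₂ : d₂ ≫ d₁ = 0) (w₁ : d₁ ≫ p = 0),
    Projective P₂ ∧ Projective P₁ ∧ Projective P₀ ∧
    Module.Finite Rᵐᵒᵖ P₂ ∧ Module.Finite Rᵐᵒᵖ P₁ ∧ Module.Finite Rᵐᵒᵖ P₀ ∧
    Epi p ∧ (ShortComplex.mk d₂ d₁ w₂).Exact ∧ (ShortComplex.mk d₁ p w₁).Exact

/-- `M` has injective dimension at most `n`, i.e. `Ext^k(-,M)` vanishes for `k > n`. -/
def HasInjDimLE (R : Type) [Ring R] (n : ℕ) (M : RMod R) : Prop :=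
  ∀ (k : ℕ), n < k → ∀ (N : RMod R), IsZero (((Ext ℤ (RMod R) k).obj (op N)).obj M)

/-!
If `T` is a functor on modules that preserves inverse limits and kills injective modules, then
`T = 0`, because every module is an inverse limit of injective ones; and `Ext¹(M, -)` vanishes only
for projective `M`.

To write `N` as an inverse limit of injectives, present it as the kernel of a map `f : E ⟶ F` of
injective modules, let `κ` be an infinite cardinal bounding the cardinality of the ring, and let `X`
be a set of cardinality greater than `κ`. For finite `S ⊆ X`, consider the pairs `(x, y)` with
`x ∈ E` and `y : X → F` of support at most `κ`, such that `y` takes the value `f x` on `S`. By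
Baer's criterion these modules are injective, and in their intersection `y` is constant with value
`f x`. Since `X` is too large to be the support of `y`, this value is zero, so the intersection is
`ker f = N`.
-/

universe u

section SmallSupport

open Cardinal

variable {A : Type u} {E F : Type*} {X : Type u} [Ring A] [AddCommGroup E] [Module A E]
  [AddCommGroup F] [Module A F] {κ : Cardinal.{u}}

variable (A F X) in
/-- The submodule of the power `X → F` formed by the functions whose support has cardinality at most
the infinite cardinal `κ`. It interpolates between the direct sum and the product, and remains
injective when `F` is injective and `κ` is at least the cardinality of the ring. -/
def smallSupport (hκ : ℵ₀ ≤ κ) : Submodule A (X → F) where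
  carrier := {y | #(Function.support y) ≤ κ}
  add_mem' {y z} hy hz := (mk_le_mk_of_subset (Function.support_add y z)).trans <|
    (mk_union_le _ _).trans <| add_le_of_le hκ hy hz
  zero_mem' := by simp
  smul_mem' a y hy := (mk_le_mk_of_subset (Function.support_const_smul_subset a y)).trans hy

lemma baer_smallSupport (hF : Module.Baer A F) (hκ : ℵ₀ ≤ κ) (hA : #A ≤ κ) :
    Module.Baer A (smallSupport A F X hκ) := by
  classical
  intro I g
  choose k hk using fun i : X => hF I (LinearMap.proj i ∘ₗ (smallSupport A F X hκ).subtype ∘ₗ g)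
  let T : Set X := ⋃ a : I, Function.support (g a).1
  have mk_T_le : #T ≤ κ := (mk_iUnion_le _).trans <|
    mul_le_of_le hκ ((mk_subtype_le _).trans hA) (ciSup_le' fun a => (g a).2)
  let h : A →ₗ[A] X → F := LinearMap.pi fun i => if i ∈ T then k i else 0
  have support_h (a : A) : Function.support (h a) ⊆ T := fun i hi => by
    by_contra hiT
    exact hi (by simp [h, hiT])
  refine ⟨h.codRestrict _ fun a => (mk_le_mk_of_subset (support_h a)).trans mk_T_le,
    fun a ha => Subtype.ext (funext fun i => ?_)⟩
  change h a i = (g ⟨a, ha⟩).1 i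
  by_cases hiT : i ∈ T
  · simpa [h, hiT] using hk i a ha
  · have : (g ⟨a, ha⟩).1 i = 0 := by
      by_contra hne
      exact hiT (Set.mem_iUnion.2 ⟨⟨a, ha⟩, hne⟩)
    simp [h, hiT, this]

lemma baer_prod (hE : Module.Baer A E) (hF : Module.Baer A F) : Module.Baer A (E × F) := by
  intro I g
  obtain ⟨h, hh⟩ := hE I (LinearMap.fst A E F ∘ₗ g)
  obtain ⟨k, hk⟩ := hF I (LinearMap.snd A E F ∘ₗ g)
  exact ⟨h.prod k, fun a ha => Prod.ext (hh a ha) (hk a ha)⟩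

lemma baer_of_comp_eq_id {i : E →ₗ[A] F} {r : F →ₗ[A] E} (hri : r ∘ₗ i = LinearMap.id)
    (hF : Module.Baer A F) : Module.Baer A E := by
  intro I g
  obtain ⟨h, hh⟩ := hF I (i ∘ₗ g)
  exact ⟨r ∘ₗ h, fun a ha => by simpa [hh a ha] using congr($hri (g ⟨a, ha⟩))⟩

variable (f : E →ₗ[A] F) (hκ : ℵ₀ ≤ κ)

/-- The pairs `(x, y)` such that `y`, a function with support of cardinality at most `κ`, takes the
value `f x` at every point of `S`. As `S` grows, these modules decrease to a copy of `ker f`. -/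
def partialGraph (S : Set X) : Submodule A (E × smallSupport A F X hκ) where
  carrier := {p | ∀ i ∈ S, p.2.1 i = f p.1}
  add_mem' hp hq i hi := by simp [hp i hi, hq i hi]
  zero_mem' := by simp
  smul_mem' a p hp i hi := by simp [hp i hi]

lemma partialGraph_antitone : Antitone (partialGraph (X := X) f hκ) :=
  fun _ _ hST _ hp i hi => hp i (hST hi)

lemma baer_partialGraph (hE : Module.Baer A E) (hF : Module.Baer A F) (hA : #A ≤ κ) {S : Set X}
    (hS : #S ≤ κ) : Module.Baer A (partialGraph f hκ S) := by
  classical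
  let overwrite : E × smallSupport A F X hκ →ₗ[A] X → F := LinearMap.pi fun i =>
    if i ∈ S then f ∘ₗ LinearMap.fst A _ _
    else LinearMap.proj i ∘ₗ (smallSupport A F X hκ).subtype ∘ₗ LinearMap.snd A _ _
  have overwrite_apply (p) (i) : overwrite p i = if i ∈ S then f p.1 else p.2.1 i := by
    simp only [overwrite, LinearMap.pi_apply]
    split_ifs <;> rfl
  have support_overwrite (p) : Function.support (overwrite p) ⊆ S ∪ Function.support p.2.1 := by
    intro i hi
    by_cases hiS : i ∈ S
    · exact .inl hiS
    · exact .inr (by simpa [overwrite_apply, hiS] using hi)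
  let r : E × smallSupport A F X hκ →ₗ[A] partialGraph f hκ S :=
    ((LinearMap.fst A _ _).prod <| overwrite.codRestrict _ fun p =>
      (mk_le_mk_of_subset (support_overwrite p)).trans <|
        (mk_union_le _ _).trans <| add_le_of_le hκ hS p.2.2).codRestrict _ fun p i hi =>
          (overwrite_apply p i).trans (if_pos hi)
  refine baer_of_comp_eq_id (i := (partialGraph f hκ S).subtype) (r := r) ?_
    (baer_prod hE (baer_smallSupport hF hκ hA))
  ext p i
  · rfl
  · change overwrite p.1 i = p.1.2.1 i
    rw [overwrite_apply]
    split_ifs with hi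
    · exact (p.2 i hi).symm
    · rfl

lemma iInf_partialGraph (hX : κ < #X) :
    ⨅ S : (Finset X)ᵒᵈ, partialGraph f hκ (S.ofDual : Set X) =
      (LinearMap.ker f).map (LinearMap.inl A E (smallSupport A F X hκ)) := by
  rw [Submodule.map_inl]
  ext ⟨x, y⟩
  simp only [Submodule.mem_iInf, Submodule.mem_prod, LinearMap.mem_ker, Submodule.mem_bot]
  constructor
  · intro h
    have hy (i : X) : y.1 i = f x := h (.toDual {i}) i (by simp)
    have hfx : f x = 0 := by
      by_contra hne
      have support_eq : Function.support y.1 = Set.univ := by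
        ext i
        simp [hy, hne]
      have : #(Function.support y.1) ≤ κ := y.2
      rw [support_eq, mk_univ] at this
      exact this.not_gt hX
    exact ⟨hfx, Subtype.ext (funext fun i => (hy i).trans hfx)⟩
  · rintro ⟨hfx, rfl⟩ S i -
    exact hfx.symm

end SmallSupport

section SubmoduleLimit

variable {A : Type*} [Ring A] (E : Type*) [AddCommGroup E] [Module A E]

/-- The functor sending a submodule of `E` to its underlying module, and inequalities to
inclusions. -/
def submoduleFunctor : Submodule A E ⥤ ModuleCat A where
  obj I := ModuleCat.of A I
  map φ := ModuleCat.ofHom (Submodule.inclusion (leOfHom φ))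

/-- The inclusions of the submodules into `E`, as a natural transformation. -/
def submoduleFunctorSubtype :
    submoduleFunctor (A := A) E ⟶ (Functor.const _).obj (ModuleCat.of A E) where
  app I := ModuleCat.ofHom I.subtype

variable {E} {J : Type*} [Preorder J] [IsConnected J]

/-- The intersection of a connected diagram of submodules is its limit in the category of
modules. -/
def iInfLimitPresentation {I : J → Submodule A E} (hI : Monotone I) :
    LimitPresentation J (ModuleCat.of A ↥(⨅ j, I j)) where
  diag := hI.functor ⋙ submoduleFunctor E
  π := { app j := ModuleCat.ofHom (Submodule.inclusion (iInf_le I j)) }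
  isLimit :=
    let toE (s : Cone (hI.functor ⋙ submoduleFunctor E)) :=
      s.π ≫ hI.functor.whiskerLeft (submoduleFunctorSubtype E)
    have toE_eq (s) (j j') (x : s.pt) : ((toE s).app j).hom x = ((toE s).app j').hom x :=
      congr($(nat_trans_from_is_connected (toE s) j j') x)
    { lift s := ModuleCat.ofHom <| ((toE s).app (Classical.arbitrary J)).hom.codRestrict _ fun x =>
        (Submodule.mem_iInf I).2 fun j => by
          rw [toE_eq s _ j]
          exact ((s.π.app j).hom x).2
      fac s j := ModuleCat.hom_ext <| LinearMap.ext fun x => Subtype.ext (toE_eq s _ j x)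
      uniq s m hm := ModuleCat.hom_ext <| LinearMap.ext fun x => Subtype.ext <|
        congr(($(hm (Classical.arbitrary J)) x : I _).1) }

end SubmoduleLimit

section InverseLimits

variable {A : Type u} [Ring A]

open Cardinal in
theorem exists_limitPresentation_injective (N : ModuleCat.{u} A) :
    ∃ (X : Type u) (P : LimitPresentation (Finset X)ᵒᵈ N),
      ∀ S, CategoryTheory.Injective (P.diag.obj S) := by
  let Q := InjectiveResolution.of N
  let j := (Q.ι.f 0).hom
  let f := (Q.cocomplex.d 0 1).hom
  have baer (n) : Module.Baer A (Q.cocomplex.X n) := Module.Baer.iff_injective.2 <|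
    (Module.injective_iff_injective_object A _).2 (Q.injective n)
  have j_injective : Function.Injective j := (ModuleCat.mono_iff_injective _).1 inferInstance
  have range_j : LinearMap.range j = LinearMap.ker f := Q.exact₀.moduleCat_range_eq_ker
  let κ : Cardinal.{u} := max ℵ₀ #A
  have hκ : ℵ₀ ≤ κ := le_max_left _ _
  let X := Set κ.out
  have hX : κ < #X := by simpa [X] using cantor κ
  let I (S : (Finset X)ᵒᵈ) := partialGraph f hκ (S.ofDual : Set X)
  have hI : Monotone I := fun S T hST => partialGraph_antitone f hκ (Finset.coe_subset.2 hST)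
  let inl := LinearMap.inl A (Q.cocomplex.X 0) (smallSupport A (Q.cocomplex.X 1) X hκ)
  have range_inl_comp_j : LinearMap.range (inl ∘ₗ j) = ⨅ S, I S := by
    rw [LinearMap.range_comp, range_j, iInf_partialGraph f hκ hX]
  let e : N ≃ₗ[A] ↥(⨅ S, I S) :=
    (LinearEquiv.ofInjective (inl ∘ₗ j) (LinearMap.inl_injective.comp j_injective)).trans
      (LinearEquiv.ofEq _ _ range_inl_comp_j)
  refine ⟨X, (iInfLimitPresentation hI).ofIso e.toModuleIso.symm, fun S => ?_⟩
  exact (Module.injective_iff_injective_object A (I S)).1 <| Module.Baer.injective <|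
    baer_partialGraph f hκ (baer 0) (baer 1) (le_max_right _ _)
      ((lt_aleph0_of_finite _).le.trans hκ)

theorem preservesInverseLimits_iff_isZero {D : Type*} [Category* D] [HasZeroMorphisms D]
    [HasZeroObject D] {T : ModuleCat.{u} A ⥤ D}
    (hT : ∀ E, CategoryTheory.Injective E → IsZero (T.obj E)) :
    (∀ (J : Type u) [Preorder J] [IsDirected J (· ≥ ·)] [Nonempty J],
      PreservesLimitsOfShape J T) ↔ ∀ N, IsZero (T.obj N) := by
  refine ⟨fun h N => ?_, fun h J _ _ _ => T.preservesLimitsOfShape_of_isZero (T.isZero h) J⟩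
  obtain ⟨X, P, hP⟩ := exists_limitPresentation_injective N
  have := h (Finset X)ᵒᵈ
  exact (P.map T).isLimit.isZero_pt (Functor.isZero _ fun S => hT _ (hP S))

end InverseLimits

section Ext

variable {k : Type*} [Ring k] {C : Type*} [Category* C] [Abelian C] [Linear k C]
  [EnoughProjectives C]

lemma isZero_ext_succ_iff {M : C} (P : ProjectiveResolution M) (n : ℕ) (N : C) :
    IsZero (((Ext k C (n + 1)).obj (op M)).obj N) ↔
      ∀ φ : P.complex.X (n + 1) ⟶ N, P.complex.d (n + 2) (n + 1) ≫ φ = 0 →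
        ∃ ψ : P.complex.X n ⟶ N, P.complex.d (n + 1) n ≫ ψ = φ := by
  rw [(P.isoExt (R := k) (n + 1) N).isZero_iff, ← HomologicalComplex.exactAt_iff_isZero_homology,
    HomologicalComplex.exactAt_iff' _ n (n + 1) (n + 2) (by simp) (by simp),
    ShortComplex.moduleCat_exact_iff]
  rfl

lemma isZero_ext_succ_of_injective (M N : C) (n : ℕ) [CategoryTheory.Injective N] :
    IsZero (((Ext k C (n + 1)).obj (op M)).obj N) := by
  let P := ProjectiveResolution.of M
  exact (isZero_ext_succ_iff P n N).2 fun φ hφ =>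
    ⟨(P.exact_succ n).descToInjective φ hφ, (P.exact_succ n).comp_descToInjective φ hφ⟩

-- Vanishing of `Ext¹(M, K)` for the first syzygy `K` of `M` yields a retraction of `K ⟶ P₀`.
lemma projective_of_isZero_ext_one {M : C}
    (h : ∀ N : C, IsZero (((Ext k C 1).obj (op M)).obj N)) : Projective M := by
  let P := ProjectiveResolution.of M
  let S := ShortComplex.mk _ _ (kernel.condition (P.π.f 0))
  have hS : S.Exact := ShortComplex.exact_kernel _
  let e : P.complex.X 1 ⟶ S.X₁ := kernel.lift _ _ P.complex_d_comp_π_f_zero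
  have epi_e : Epi e := P.exact₀.epi_kernelLift
  have he : e ≫ S.f = P.complex.d 1 0 := kernel.lift_ι _ _ _
  have d_comp_e : P.complex.d 2 1 ≫ e = 0 := by
    rw [← cancel_mono S.f, Category.assoc, he, zero_comp, P.complex.d_comp_d]
  obtain ⟨r, hr⟩ := (isZero_ext_succ_iff P 0 _).1 (h S.X₁) e d_comp_e
  have retraction : S.f ≫ r = 𝟙 _ := by
    rw [← cancel_epi e, ← Category.assoc, he, hr, Category.comp_id]
  let σ := ShortComplex.Splitting.ofExactOfRetraction S hS r retraction
    (inferInstanceAs (Epi (P.π.f 0)))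
  exact Retract.projective ⟨σ.s, S.g, σ.s_g⟩

variable (k) in
theorem isZero_ext_one_iff_projective (M : C) :
    (∀ N : C, IsZero (((Ext k C 1).obj (op M)).obj N)) ↔ Projective M :=
  ⟨projective_of_isZero_ext_one, fun _ N => isZero_Ext_succ_of_projective M N 0⟩

end Ext

theorem ext1_commutes_with_inverse_limits_iff_projective_general
    (k : Type*) [Ring k] (A : Type u) [Ring A] [Linear k (ModuleCat.{u} A)] (M : ModuleCat.{u} A) :
    (∀ (J : Type u) [Preorder J] [IsDirected J (· ≥ ·)] [Nonempty J],
      PreservesLimitsOfShape J ((Ext k (ModuleCat.{u} A) 1).obj (op M))) ↔ Projective M :=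
  (preservesInverseLimits_iff_isZero fun E _ => isZero_ext_succ_of_injective M E 0).trans
    (isZero_ext_one_iff_projective k M)

theorem ext1_commutes_with_inverse_limits_iff_projective
    (R : Type) [Ring R] (M : RMod R) :
    (∀ (J : Type) [Preorder J] [IsDirected J (· ≥ ·)] [Nonempty J],
      PreservesLimitsOfShape J (extFun R 1 M)) ↔ Projective M :=
  ext1_commutes_with_inverse_limits_iff_projective_general ℤ Rᵐᵒᵖ M
end
end

section
/- Let M be a right R-module of injective dimension at most n ≥ 1. The functor Extⁿ_R(−, M) inverts countable products (i.e., for every countable family (M_i)_{i<ω} of right R-modules the canonical homomorphism ⨁_{i<ω} Extⁿ_R(M_i, M) → Extⁿ_R(∏_{i<ω} M_i, M) is an isomorphism) if and only if M has injective dimension at most n − 1. -/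
open CategoryTheory CategoryTheory.Limits Opposite

noncomputable section

/-!
Suppose that `Extⁿ⁺¹(-, M)` vanishes, let `N` be an object, and consider
`⨁_ℕ Extⁿ(N, M) ⟶ Extⁿ(∏_ℕ N, M) ⟶ Extⁿ(⨁_ℕ N, M)`, where the second map is restriction along
the monomorphism `⨁_ℕ N ⟶ ∏_ℕ N`. The second map is surjective by the long exact sequence, so if
the first map is an isomorphism, then the composite is surjective. Restricting further along the
`j`-th inclusion `N ⟶ ⨁_ℕ N` turns the composite into the `j`-th projection to `Extⁿ(N, M)`.
Now let `x : Extⁿ(N, M)`, pull it back along the codiagonal `⨁_ℕ N ⟶ N`, and lift the result to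
`⨁_ℕ Extⁿ(N, M)`. Every component of the lift is equal to `x`, while almost all of them vanish;
hence `x = 0`.

The long exact sequence is available for `Abelian.Ext`, whereas `Ext` is defined by deriving
`Hom(-, M)`. The two are compared through the cocycles of a projective resolution.
-/

universe w v u

section

variable {G H K : Type*} [AddGroup G] [AddGroup H] [AddGroup K] {f : G →+ H} {g : G →+ K}

/-- Two quotients of `G` by the same subgroup, presented as surjections, are isomorphic. -/
def addEquivOfKerEq (hf : Function.Surjective f) (hg : Function.Surjective g)
    (h : f.ker = g.ker) : H ≃+ K :=
  (QuotientAddGroup.quotientKerEquivOfSurjective f hf).symm.trans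
    ((QuotientAddGroup.quotientAddEquivOfEq h).trans
      (QuotientAddGroup.quotientKerEquivOfSurjective g hg))

lemma addEquivOfKerEq_apply (hf : Function.Surjective f) (hg : Function.Surjective g)
    (h : f.ker = g.ker) (x : G) : addEquivOfKerEq hf hg h (f x) = g x := by
  have hx : (QuotientAddGroup.quotientKerEquivOfSurjective f hf).symm (f x) = (x : G ⧸ f.ker) :=
    (QuotientAddGroup.quotientKerEquivOfSurjective f hf).symm_apply_eq.2 rfl
  simp only [addEquivOfKerEq, AddEquiv.trans_apply, hx]
  rfl

end

lemma homologyUnop_inv_naturality {V ι : Type*} [Category* V] [HasZeroMorphisms V]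
    {c : ComplexShape ι} {K L : HomologicalComplex Vᵒᵖ c} (φ : K ⟶ L) (i : ι)
    [K.HasHomology i] [L.HasHomology i] :
    (HomologicalComplex.homologyMap φ i).unop ≫ (K.homologyUnop i).inv =
      (L.homologyUnop i).inv ≫
        HomologicalComplex.homologyMap ((HomologicalComplex.unopFunctor V c).map φ.op) i := by
  have h := HomologicalComplex.homologyOp_hom_naturality
    ((HomologicalComplex.unopFunctor V c).map φ.op) i
  exact congr($((CommSq.mk h.symm).horiz_inv.w).unop)

section Comparison

variable (A : Type*) [Ring A] {C : Type u} [Category.{v} C] [Abelian C] [Linear A C]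

/-- The map of cochain complexes `Hom(L, M) ⟶ Hom(K, M)` induced by `φ : K ⟶ L`. -/
def linearYonedaObjMap {K L : ChainComplex C ℕ} (φ : K ⟶ L) (M : C) :
    L.linearYonedaObj A M ⟶ K.linearYonedaObj A M :=
  (HomologicalComplex.unopFunctor _ _).map
    ((((linearYoneda A C).obj M).rightOp.mapHomologicalComplex _).map φ).op

variable {A} in
lemma isoExt_hom_naturality [EnoughProjectives C] {X Y : C} {P : ProjectiveResolution X}
    {Q : ProjectiveResolution Y} {g : X ⟶ Y} (φ : ProjectiveResolution.Hom P Q g) (n : ℕ)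
    (M : C) :
    ((Ext A C n).map g.op).app M ≫ (P.isoExt n M).hom =
      (Q.isoExt n M).hom ≫ HomologicalComplex.homologyMap (linearYonedaObjMap A φ.hom M) n := by
  let F := ((linearYoneda A C).obj M).rightOp
  have derived := ProjectiveResolution.isoLeftDerivedObj_inv_naturality g P Q φ.hom
    (φ.hom_f_zero_comp_π_f_zero.trans (by simp)) F n
  have homology := homologyUnop_inv_naturality ((F.mapHomologicalComplex _).map φ.hom) n
  exact ((CommSq.mk congr($(derived).unop)).vert_comp (CommSq.mk homology)).w

section Cocycle

variable (K L : ChainComplex C ℕ) (M : C) (n : ℕ)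

/-- A cycle of `Hom(K, M)` in degree `n`, regarded as a morphism `K.X n ⟶ M`. -/
def cyclesHom : (K.linearYonedaObj A M).cycles n →+ (K.X n ⟶ M) :=
  ((K.linearYonedaObj A M).iCycles n).hom.toAddMonoidHom

variable {n}

lemma d_comp_cyclesHom (c : (K.linearYonedaObj A M).cycles n) :
    K.d (n + 1) n ≫ cyclesHom A K M n c = 0 :=
  congr($((K.linearYonedaObj A M).iCycles_d n (n + 1)) c)

lemma cyclesHom_injective : Function.Injective (cyclesHom A K M n) :=
  (ModuleCat.mono_iff_injective ((K.linearYonedaObj A M).iCycles n)).1 inferInstance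

variable {K M} in
lemma exists_cyclesHom_eq {f : K.X n ⟶ M} (hf : K.d (n + 1) n ≫ f = 0) :
    ∃ c, cyclesHom A K M n c = f :=
  (ShortComplex.moduleCat_exact_iff _).1
    (ShortComplex.exact_of_f_is_kernel
      (ShortComplex.mk _ _ ((K.linearYonedaObj A M).iCycles_d n (n + 1)))
      ((K.linearYonedaObj A M).cyclesIsKernel n (n + 1) (by simp))) f hf

variable {K L} in
lemma cyclesHom_cyclesMap (φ : K ⟶ L) (c : (L.linearYonedaObj A M).cycles n) :
    cyclesHom A K M n (HomologicalComplex.cyclesMap (linearYonedaObjMap A φ M) n c) =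
      φ.f n ≫ cyclesHom A L M n c :=
  congr($(HomologicalComplex.cyclesMap_i (linearYonedaObjMap A φ M) n) c)

lemma homologyπ_zero_eq_zero_iff (c : (K.linearYonedaObj A M).cycles 0) :
    (K.linearYonedaObj A M).homologyπ 0 c = 0 ↔ cyclesHom A K M 0 c = 0 := by
  rw [map_eq_zero_iff _ (cyclesHom_injective A K M), map_eq_zero_iff _
    ((ModuleCat.mono_iff_injective ((K.linearYonedaObj A M).homologyπ 0)).1 inferInstance)]

lemma homologyπ_succ_eq_zero_iff (c : (K.linearYonedaObj A M).cycles (n + 1)) :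
    (K.linearYonedaObj A M).homologyπ (n + 1) c = 0 ↔
      ∃ g : K.X n ⟶ M, K.d (n + 1) n ≫ g = cyclesHom A K M (n + 1) c := by
  have hi (g : K.X n ⟶ M) : cyclesHom A K M (n + 1)
      ((K.linearYonedaObj A M).toCycles n (n + 1) g) = K.d (n + 1) n ≫ g :=
    congr($((K.linearYonedaObj A M).toCycles_i n (n + 1)) g)
  have toCycles_exact := (ShortComplex.moduleCat_exact_iff _).1
    (ShortComplex.exact_of_g_is_cokernel
      (ShortComplex.mk _ _ ((K.linearYonedaObj A M).toCycles_comp_homologyπ n (n + 1)))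
      ((K.linearYonedaObj A M).homologyIsCokernel n (n + 1) (by simp)))
  constructor
  · intro hc
    obtain ⟨g, hg⟩ := toCycles_exact c hc
    exact ⟨g, (hi g).symm.trans congr(cyclesHom A K M (n + 1) $hg)⟩
  · rintro ⟨g, hg⟩
    rw [← cyclesHom_injective A K M ((hi g).trans hg)]
    exact congr($((K.linearYonedaObj A M).toCycles_comp_homologyπ n (n + 1)) g)

end Cocycle

section CyclesToExt

variable [HasExt.{w} C] {X Y : C} (P : ProjectiveResolution X) (M : C) (n : ℕ)

variable {M} in
lemma extMk_zero_eq_zero_iff (f : P.complex.X 0 ⟶ M) (hf : P.complex.d 1 0 ≫ f = 0) :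
    P.extMk f 1 rfl hf = 0 ↔ f = 0 := by
  refine ⟨fun h ↦ ?_, by rintro rfl; exact P.extMk_zero 1 rfl⟩
  rw [← P.extEquivCohomologyClass.apply_eq_iff_eq, P.extEquivCohomologyClass_extMk,
    P.extEquivCohomologyClass_zero, CochainComplex.HomComplex.CohomologyClass.mk_eq_zero_iff,
    CochainComplex.HomComplex.Cocycle.toSingleMk_mem_coboundaries_iff _ _ _ _ _ 1 (by simp)] at h
  obtain ⟨g, hg⟩ := h
  have hg₀ : g = 0 := (P.cochainComplex.isZero_of_isStrictlyLE 0 1).eq_of_src g 0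
  rw [hg₀, comp_zero] at hg
  rw [← cancel_epi (P.cochainComplexXIso (-(0 : ℕ)) 0 rfl).hom, ← hg, comp_zero]

/-- The class in `Abelian.Ext` of a cycle of `Hom(P, M)`, for `P` a projective resolution. -/
def cyclesToExt : (P.complex.linearYonedaObj A M).cycles n →+ Abelian.Ext X M n where
  toFun c := P.extMk (cyclesHom A P.complex M n c) (n + 1) rfl (d_comp_cyclesHom A P.complex M c)
  map_zero' := by simp
  map_add' c d := by simp [P.add_extMk]

lemma cyclesToExt_surjective : Function.Surjective (cyclesToExt A P M n) := by
  intro x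
  obtain ⟨f, hf, rfl⟩ := P.extMk_surjective x (n + 1) rfl
  obtain ⟨c, rfl⟩ := exists_cyclesHom_eq A hf
  exact ⟨c, rfl⟩

lemma ker_homologyπ_eq_ker_cyclesToExt :
    ((P.complex.linearYonedaObj A M).homologyπ n).hom.toAddMonoidHom.ker =
      (cyclesToExt A P M n).ker := by
  ext c
  cases n with
  | zero =>
    exact (homologyπ_zero_eq_zero_iff A _ M c).trans
      (extMk_zero_eq_zero_iff P _ (d_comp_cyclesHom A P.complex M c)).symm
  | succ n =>
    exact (homologyπ_succ_eq_zero_iff A _ M c).trans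
      (P.extMk_eq_zero_iff _ _ rfl (d_comp_cyclesHom A P.complex M c) n rfl).symm

/-- The cohomology of `Hom(P, M)` is `Abelian.Ext` if `P` is a projective resolution. -/
def homologyAddEquivExt :
    (P.complex.linearYonedaObj A M).homology n ≃+ Abelian.Ext X M n :=
  addEquivOfKerEq ((ModuleCat.epi_iff_surjective
      ((P.complex.linearYonedaObj A M).homologyπ n)).1 inferInstance)
    (cyclesToExt_surjective A P M n) (ker_homologyπ_eq_ker_cyclesToExt A P M n)

variable {M n} in
lemma homologyAddEquivExt_homologyπ (c : (P.complex.linearYonedaObj A M).cycles n) :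
    homologyAddEquivExt A P M n ((P.complex.linearYonedaObj A M).homologyπ n c) =
      cyclesToExt A P M n c :=
  addEquivOfKerEq_apply _ _ _ c

variable {P M n} in
lemma cyclesToExt_cyclesMap {Q : ProjectiveResolution Y} {g : X ⟶ Y}
    (φ : ProjectiveResolution.Hom P Q g) (c : (Q.complex.linearYonedaObj A M).cycles n) :
    cyclesToExt A P M n (HomologicalComplex.cyclesMap (linearYonedaObjMap A φ.hom M) n c) =
      (Abelian.Ext.mk₀ g).comp (cyclesToExt A Q M n c) (zero_add n) := by
  refine .trans ?_ (ProjectiveResolution.mk₀_comp_extMk _ _ rfl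
    (d_comp_cyclesHom A Q.complex M c) φ).symm
  simp only [cyclesToExt, AddMonoidHom.coe_mk, ZeroHom.coe_mk, cyclesHom_cyclesMap]

variable {P M n} in
lemma homologyAddEquivExt_homologyMap {Q : ProjectiveResolution Y} {g : X ⟶ Y}
    (φ : ProjectiveResolution.Hom P Q g) (y : (Q.complex.linearYonedaObj A M).homology n) :
    homologyAddEquivExt A P M n
        (HomologicalComplex.homologyMap (linearYonedaObjMap A φ.hom M) n y) =
      (Abelian.Ext.mk₀ g).comp (homologyAddEquivExt A Q M n y) (zero_add n) := by
  obtain ⟨c, rfl⟩ := (ModuleCat.epi_iff_surjective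
    ((Q.complex.linearYonedaObj A M).homologyπ n)).1 inferInstance y
  rw [homologyAddEquivExt_homologyπ, ← cyclesToExt_cyclesMap,
    ← homologyAddEquivExt_homologyπ]
  exact congr(homologyAddEquivExt A P M n
    ($(HomologicalComplex.homologyπ_naturality (linearYonedaObjMap A φ.hom M) n) c))

end CyclesToExt

section Ext

variable [EnoughProjectives C] [HasExt.{w} C] {X Y : C} (M : C) (n : ℕ)

variable (X) in
/-- `Ext` obtained by deriving `Hom(-, M)` agrees with `Ext` in the derived category. -/
def extAddEquiv : ((Ext A C n).obj (op X)).obj M ≃+ Abelian.Ext X M n :=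
  ((ProjectiveResolution.of X).isoExt n M).toLinearEquiv.toAddEquiv.trans
    (homologyAddEquivExt A (ProjectiveResolution.of X) M n)

variable {M n} in
lemma extAddEquiv_map_app (g : X ⟶ Y) (y : ((Ext A C n).obj (op Y)).obj M) :
    extAddEquiv A X M n (((Ext A C n).map g.op).app M y) =
      (Abelian.Ext.mk₀ g).comp (extAddEquiv A Y M n y) (zero_add n) := by
  let φ : ProjectiveResolution.Hom (.of X) (.of Y) g :=
    ⟨ProjectiveResolution.lift g _ _,
      (ProjectiveResolution.lift_commutes_zero g _ _).trans (by simp)⟩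
  refine .trans ?_ (homologyAddEquivExt_homologyMap A φ _)
  exact congr(homologyAddEquivExt A _ M n ($(isoExt_hom_naturality (A := A) φ n M) y))

lemma subsingleton_ext_iff_isZero :
    Subsingleton (Abelian.Ext X M n) ↔ IsZero (((Ext A C n).obj (op X)).obj M) := by
  rw [ModuleCat.isZero_iff_subsingleton]
  exact (extAddEquiv A X M n).symm.toEquiv.subsingleton_congr

end Ext

section LongExactSequence

variable [EnoughProjectives C] (M : C) (n : ℕ)

instance preservesZeroMorphisms_ext_flip_obj :
    ((Ext A C n).flip.obj M).PreservesZeroMorphisms where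
  map_zero X Y := by
    have := HasExt.standard C
    ext y
    apply (extAddEquiv A _ M n).injective
    refine (extAddEquiv_map_app A (0 : Y.unop ⟶ X.unop) y).trans ?_
    rw [Abelian.Ext.mk₀_zero, Abelian.Ext.zero_comp]
    exact (map_zero _).symm

variable {M n} in
lemma epi_ext_flip_map_of_shortExact {S : ShortComplex C} (hS : S.ShortExact)
    (h : IsZero (((Ext A C (n + 1)).obj (op S.X₃)).obj M)) :
    Epi (((Ext A C n).flip.obj M).map S.f.op) := by
  have := HasExt.standard C
  have := (subsingleton_ext_iff_isZero A M (n + 1)).2 h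
  refine (ModuleCat.epi_iff_surjective _).2 fun x ↦ ?_
  obtain ⟨y, hy⟩ := Abelian.Ext.contravariant_sequence_exact₁ hS M (extAddEquiv A _ M n x)
    (add_comm 1 n) (Subsingleton.elim _ _)
  refine ⟨(extAddEquiv A _ M n).symm y, (extAddEquiv A _ M n).injective ?_⟩
  refine (extAddEquiv_map_app A S.f _).trans ?_
  rw [AddEquiv.apply_symm_apply, hy]

end LongExactSequence

end Comparison

section SigmaToPi

variable {ι : Type w} [DecidableEq ι]

section

variable {C : Type*} [Category* C] [HasZeroMorphisms C] (X : ι → C) [HasCoproduct X] [HasProduct X]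

/-- The canonical morphism `⨁ Xᵢ ⟶ ∏ Xᵢ`. -/
def sigmaToPi : ∐ X ⟶ ∏ᶜ X :=
  Pi.lift (Sigma.π X)

lemma sigmaToPi_π (i : ι) : sigmaToPi X ≫ Pi.π X i = Sigma.π X i :=
  Pi.lift_π _ i

end

section ModuleCat

variable {A : Type*} [Ring A] (X : ι → ModuleCat.{max w v} A)

lemma coprodIsoDirectSum_hom_apply (z : (∐ X : ModuleCat.{max w v} A)) (i : ι) :
    letI y : DirectSum ι (fun i ↦ X i) := (ModuleCat.coprodIsoDirectSum.{_, w, v} X).hom z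
    y i = Sigma.π X i z := by
  have h : (ModuleCat.coprodIsoDirectSum.{_, w, v} X).hom ≫
      ModuleCat.ofHom (DirectSum.component A ι (fun i ↦ X i) i) = Sigma.π X i := by
    refine Sigma.hom_ext _ _ fun j ↦ ?_
    rw [← Category.assoc, ModuleCat.ι_coprodIsoDirectSum_hom]
    ext x
    obtain rfl | hij := eq_or_ne j i
    · simp
    · simp [Sigma.ι_π_of_ne X hij, DirectSum.component.of, hij]
  exact congr($h z)

lemma finite_setOf_sigma_π_ne_zero (z : (∐ X : ModuleCat.{max w v} A)) :
    {i | Sigma.π X i z ≠ 0}.Finite := by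
  simp_rw [← coprodIsoDirectSum_hom_apply.{w, v}]
  exact DFinsupp.finite_support _

lemma sigma_π_hom_ext {z z' : (∐ X : ModuleCat.{max w v} A)}
    (h : ∀ i, Sigma.π X i z = Sigma.π X i z') : z = z' := by
  refine (ModuleCat.coprodIsoDirectSum.{_, w, v} X).toLinearEquiv.injective
    (DFinsupp.ext fun i ↦ ?_)
  exact (coprodIsoDirectSum_hom_apply.{w, v} X z i).trans
    ((h i).trans (coprodIsoDirectSum_hom_apply.{w, v} X z' i).symm)

instance mono_sigmaToPi : Mono (sigmaToPi X) := by
  refine (ModuleCat.mono_iff_injective _).2 fun z z' h ↦ sigma_π_hom_ext.{w, v} X fun i ↦ ?_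
  rw [← sigmaToPi_π, ConcreteCategory.comp_apply, h, ConcreteCategory.comp_apply]

end ModuleCat

section

variable {A : Type*} [Ring A] {C : Type*} [Category* C] [HasZeroMorphisms C]
  (E : Cᵒᵖ ⥤ ModuleCat.{max w v} A) [E.PreservesZeroMorphisms] (X : C)
  [HasCoproduct fun _ : ι ↦ X] [HasProduct fun _ : ι ↦ X]

lemma sigmaDesc_map_π_comp_map_sigmaToPi_comp_map_ι (j : ι) :
    Sigma.desc (fun i ↦ E.map (Pi.π (fun _ : ι ↦ X) i).op) ≫
      E.map (sigmaToPi fun _ : ι ↦ X).op ≫ E.map (Sigma.ι (fun _ : ι ↦ X) j).op =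
    Sigma.π (fun _ : ι ↦ E.obj (op X)) j := by
  refine Sigma.hom_ext _ _ fun i ↦ ?_
  simp only [Sigma.ι_desc_assoc, ← E.map_comp, ← op_comp, Category.assoc, sigmaToPi_π]
  obtain rfl | hij := eq_or_ne i j
  · simp
  · simp [Sigma.ι_π_of_ne _ hij, Sigma.ι_π_of_ne _ hij.symm]

lemma isZero_obj_of_epi_sigmaDesc_map_π [Infinite ι] [Epi (E.map (sigmaToPi fun _ : ι ↦ X).op)]
    [Epi (Sigma.desc fun i ↦ E.map (Pi.π (fun _ : ι ↦ X) i).op)] : IsZero (E.obj (op X)) := by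
  let p : ∐ (fun _ : ι ↦ E.obj (op X)) ⟶ E.obj (op (∐ fun _ : ι ↦ X)) :=
    Sigma.desc (fun i ↦ E.map (Pi.π (fun _ : ι ↦ X) i).op) ≫ E.map (sigmaToPi fun _ : ι ↦ X).op
  let codiagonal : ∐ (fun _ : ι ↦ X) ⟶ X := Limits.Sigma.desc fun _ ↦ 𝟙 X
  refine ModuleCat.isZero_iff_subsingleton.2 (subsingleton_of_forall_eq 0 fun x ↦ ?_)
  obtain ⟨z, hz⟩ := (ModuleCat.epi_iff_surjective p).1 inferInstance (E.map codiagonal.op x)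
  have component_eq (j : ι) : Sigma.π (fun _ : ι ↦ E.obj (op X)) j z = x := by
    have hj : E.map codiagonal.op ≫ E.map (Sigma.ι (fun _ : ι ↦ X) j).op = 𝟙 _ := by
      rw [← E.map_comp, ← op_comp, Sigma.ι_desc, op_id, E.map_id]
    rw [← sigmaDesc_map_π_comp_map_sigmaToPi_comp_map_ι, ← Category.assoc,
      ConcreteCategory.comp_apply, hz]
    exact congr($hj x)
  obtain ⟨j, hj⟩ := (finite_setOf_sigma_π_ne_zero.{w, v} _ z).exists_notMem
  rw [← component_eq j]
  exact not_not.1 hj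

end

end SigmaToPi

theorem extN_inverts_countable_products_iff_injdim_lt_general {A : Type*} [Ring A] {C : Type u}
    [Category.{max w v} C] [Abelian C] [Linear A C] [EnoughProjectives C] {ι : Type w}
    [DecidableEq ι] [Infinite ι] [HasProductsOfShape ι C] [HasCoproductsOfShape ι C]
    [∀ X : C, Mono (sigmaToPi fun _ : ι ↦ X)] (n : ℕ) (M : C)
    (hM : ∀ X : C, IsZero (((Ext A C (n + 1)).obj (op X)).obj M)) :
    (∀ X : ι → C, IsIso (Sigma.desc fun i ↦ ((Ext A C n).flip.obj M).map (Pi.π X i).op)) ↔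
      ∀ X : C, IsZero (((Ext A C n).obj (op X)).obj M) := by
  refine ⟨fun h X ↦ ?_, fun h X ↦ ?_⟩
  · have := h fun _ ↦ X
    have : Epi (((Ext A C n).flip.obj M).map (sigmaToPi fun _ : ι ↦ X).op) :=
      epi_ext_flip_map_of_shortExact A
        (S := .mk (sigmaToPi fun _ : ι ↦ X) (cokernel.π _) (by simp))
        { exact := ShortComplex.exact_cokernel _ } (hM _)
    exact isZero_obj_of_epi_sigmaDesc_map_π.{w, v} (ι := ι) ((Ext A C n).flip.obj M) X
  · refine isIso_of_source_target_iso_zero _ (IsZero.isoZero ?_) (h _).isoZero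
    rw [IsZero.iff_id_eq_zero]
    exact Sigma.hom_ext _ _ fun i ↦ (h (X i)).eq_of_src _ _

lemma hasInjDimLE_iff_of_succ {R : Type} [Ring R] {n : ℕ} {M : RMod R}
    (hM : HasInjDimLE R (n + 1) M) :
    HasInjDimLE R n M ↔ ∀ N : RMod R, IsZero (((Ext ℤ (RMod R) (n + 1)).obj (op N)).obj M) := by
  refine ⟨fun h ↦ h (n + 1) n.lt_succ_self, fun h k hk ↦ ?_⟩
  obtain rfl | hk := (Nat.succ_le_of_lt hk).eq_or_lt
  exacts [h, hM k hk]

theorem extN_inverts_countable_products_iff_injdim_lt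
    (R : Type) [Ring R] (n : ℕ) (hn : 1 ≤ n) (M : RMod R) (hM : HasInjDimLE R n M) :
    (∀ (N : ℕ → RMod R),
      IsIso (Sigma.desc
        (fun i => ((Ext ℤ (RMod R) n).flip.obj M).map ((Pi.π N i).op)))) ↔
    HasInjDimLE R (n - 1) M := by
  obtain ⟨n, rfl⟩ := Nat.exists_eq_add_of_le' hn
  exact (extN_inverts_countable_products_iff_injdim_lt_general.{0, 0} (n + 1) M
    (hM (n + 2) (by omega))).trans (hasInjDimLE_iff_of_succ hM).symm
end
end

section
/- If M is an fp-Ω¹ right R-module, then Ext¹_R(M, −) commutes with direct limits: for every direct system (M_i)_{i∈I} over a directed set I, the canonical homomorphism colim Ext¹_R(M, M_i) → Ext¹_R(M, colim M_i) is an isomorphism. -/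
open CategoryTheory CategoryTheory.Limits Opposite

noncomputable section

/-! For `0 → K → P → M → 0` exact with `P` projective, splicing a projective resolution of `K` with
`K → P` gives a projective resolution of `M`, from which one reads off, naturally in `Y`, the exact
sequence `Hom(P, Y) → Hom(K, Y) → Ext¹(M, Y) → 0`. The module `P` need not be finitely generated,
but `K` is, so `K → P` is fixed by an endomorphism `P → L → P` which factors through a finitely
generated free module `L`; hence `Hom(P, -)` and `Hom(L, -)` have the same image in `Hom(K, -)`, and
`Ext¹(M, -)` is also the cokernel of `Hom(L, -) → Hom(K, -)`. Both of these functors preserve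
filtered colimits, and so does their cokernel. -/

universe w u

section FinitelyPresented

attribute [local instance] Cardinal.fact_isRegular_aleph0

variable {S : Type u} [Ring S]

lemma isFinitelyPresentable_free_obj (ι : Type u) [Finite ι] :
    IsFinitelyPresentable.{u} ((ModuleCat.free S).obj ι) := by
  have : IsFinitelyPresentable.{u} ι := (hasCardinalLT_of_finite ι _ le_rfl).isCardinalPresentable
  have : (forget (ModuleCat.{u} S)).IsFinitelyAccessible :=
    Functor.isFinitelyAccessible_iff_preservesFilteredColimits.2 inferInstance
  exact (ModuleCat.adj S).isCardinalPresentable_leftAdjoint_obj Cardinal.aleph0 ι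

lemma isFinitelyPresentable_X₃_of_exact {C : Type*} [Category* C] [Preadditive C] [Balanced C]
    [LocallySmall.{w} C] {T : ShortComplex C} (hT : T.Exact) [Epi T.g]
    [IsFinitelyPresentable.{w} T.X₁] [IsFinitelyPresentable.{w} T.X₂] :
    IsFinitelyPresentable.{w} T.X₃ := by
  have (j : WalkingParallelPair) : IsFinitelyPresentable.{w} ((parallelPair T.f 0).obj j) := by
    cases j <;> assumption
  exact isCardinalPresentable_of_isColimit _ hT.gIsCokernel _ (hasCardinalLT_of_finite _ _ le_rfl)

lemma isFinitelyPresentable_of_finitePresentation (K : ModuleCat.{u} S)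
    [hK : Module.FinitePresentation S K] : IsFinitelyPresentable.{u} K := by
  obtain ⟨generators, hspan, relations, hker⟩ := hK
  let d : (ModuleCat.free S).obj relations ⟶ (ModuleCat.free S).obj generators :=
    ModuleCat.ofHom (Finsupp.linearCombination S (↑))
  let π : (ModuleCat.free S).obj generators ⟶ K :=
    ModuleCat.ofHom (Finsupp.linearCombination S (↑))
  have hdπ : d.hom.range = π.hom.ker :=
    (Finsupp.range_linearCombination S).trans
      (congr(Submodule.span S $Subtype.range_coe).trans hker)
  let T := ShortComplex.moduleCatMkOfKerLERange d π hdπ.le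
  have hT : T.Exact := ShortComplex.Exact.moduleCat_of_range_eq_ker d π hdπ
  have : Epi T.g := by
    rw [ModuleCat.epi_iff_range_eq_top]
    exact (Finsupp.range_linearCombination S).trans
      (congr(Submodule.span S $Subtype.range_coe).trans hspan)
  have : IsFinitelyPresentable.{u} T.X₁ := isFinitelyPresentable_free_obj relations
  have : IsFinitelyPresentable.{u} T.X₂ := isFinitelyPresentable_free_obj generators
  exact isFinitelyPresentable_X₃_of_exact hT

lemma exists_finsupp_factorization {S K P : Type*} [Semiring S] [AddCommMonoid K] [Module S K]
    [Module.Finite S K] [AddCommMonoid P] [Module S P] [Module.Projective S P] (f : K →ₗ[S] P) :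
    ∃ (T : Finset P) (s : P →ₗ[S] T →₀ S) (φ : (T →₀ S) →ₗ[S] P), φ ∘ₗ s ∘ₗ f = f := by
  classical
  obtain ⟨σ, hσ⟩ := Module.projective_def'.1 ‹Module.Projective S P›
  obtain ⟨G, hG⟩ := Module.Finite.fg_top (R := S) (M := K)
  let T : Finset P := G.biUnion fun g => (σ (f g)).support
  refine ⟨T, Finsupp.lsubtypeDomain (T : Set P) ∘ₗ σ, Finsupp.linearCombination S (↑), ?_⟩
  refine LinearMap.ext_on hG fun g hg => ?_
  have hT : (σ (f g)).support ⊆ T := Finset.subset_biUnion_of_mem (fun g => (σ (f g)).support) hg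
  calc Finsupp.linearCombination S (↑) ((σ (f g)).subtypeDomain (· ∈ T))
      = Finsupp.linearCombination S id (σ (f g)) := by
        simp only [Finsupp.linearCombination_apply]
        exact Finsupp.sum_subtypeDomain_index (h := fun x a => a • x) hT
    _ = f g := congr($hσ (f g))

end FinitelyPresented

section Exactness

variable {C : Type*} [Category* C] [Abelian C] {W X Y Z : C} {f : X ⟶ Y} {g : Y ⟶ Z}
  {w : f ≫ g = 0}

lemma exact_comp_mono (h : (ShortComplex.mk f g w).Exact) (i : Z ⟶ W) [Mono i] :
    (ShortComplex.mk f (g ≫ i) (by rw [reassoc_of% w, zero_comp])).Exact := by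
  let φ : ShortComplex.mk f g w ⟶ .mk f (g ≫ i) (by rw [reassoc_of% w, zero_comp]) :=
    { τ₁ := 𝟙 _, τ₂ := 𝟙 _, τ₃ := i }
  exact (ShortComplex.exact_iff_of_epi_of_isIso_of_mono φ).1 h

lemma exact_epi_comp (h : (ShortComplex.mk f g w).Exact) (e : W ⟶ X) [Epi e] :
    (ShortComplex.mk (e ≫ f) g (by rw [Category.assoc, w, comp_zero])).Exact := by
  let φ : ShortComplex.mk (e ≫ f) g (by rw [Category.assoc, w, comp_zero]) ⟶ .mk f g w :=
    { τ₁ := e, τ₂ := 𝟙 _, τ₃ := 𝟙 _ }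
  exact (ShortComplex.exact_iff_of_epi_of_isIso_of_mono φ).2 h

lemma exact_of_exact_of_comp_eq (h : (ShortComplex.mk f g w).Exact) {a : X ⟶ W} {f' : W ⟶ Y}
    (hf : a ≫ f' = f) (w' : f' ≫ g = 0) : (ShortComplex.mk f' g w').Exact := by
  rw [ShortComplex.exact_iff_exact_up_to_refinements] at h ⊢
  intro T y hy
  obtain ⟨T', π, hπ, x, hx⟩ := h y hy
  exact ⟨T', π, hπ, x ≫ a, by rw [Category.assoc, hf, hx]⟩

lemma exact_of_exact_evaluation {J : Type*} [Category* J] {T : ShortComplex (J ⥤ C)}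
    (h : ∀ j, (T.map ((evaluation J C).obj j)).Exact) : T.Exact := by
  rw [T.exact_iff_isZero_homology, Functor.isZero_iff]
  intro j
  exact ((ShortComplex.exact_iff_isZero_homology _).1 (h j)).of_iso
    (T.mapHomologyIso ((evaluation J C).obj j)).symm

end Exactness

section SplicedResolution

variable {C : Type*} [Category* C] [Abelian C]

/-- The augmentation `Q₀ ⟶ Z` of a projective resolution `Q` of `Z`, that is `Q.π.f 0` with
codomain `Z` itself rather than the degree `0` part of a complex. -/
def augmentation {Z : C} (Q : ProjectiveResolution Z) : Q.complex.X 0 ⟶ Z := Q.π.f 0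

instance epi_augmentation {Z : C} (Q : ProjectiveResolution Z) : Epi (augmentation Q) :=
  inferInstanceAs (Epi (Q.π.f 0))

lemma d_comp_augmentation {Z : C} (Q : ProjectiveResolution Z) :
    Q.complex.d 1 0 ≫ augmentation Q = 0 :=
  Q.complex_d_comp_π_f_zero

variable {S : ShortComplex C}

/-- The chain complex `⋯ ⟶ Q₁ ⟶ Q₀ ⟶ S.X₂` obtained by splicing a projective resolution `Q` of
`S.X₁` with `S.f : S.X₁ ⟶ S.X₂`. -/
def splicedComplex (S : ShortComplex C) (Q : ProjectiveResolution S.X₁) : ChainComplex C ℕ :=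
  Q.complex.augment (augmentation Q ≫ S.f) (by
    rw [← Category.assoc, d_comp_augmentation, zero_comp])

lemma splicedComplex_exactAt_succ (hS : S.ShortExact) (Q : ProjectiveResolution S.X₁) (n : ℕ) :
    (splicedComplex S Q).ExactAt (n + 1) := by
  rw [HomologicalComplex.exactAt_iff' _ (n + 2) (n + 1) n (by simp) (by simp)]
  cases n with
  | zero =>
    have := hS.mono_f
    exact exact_comp_mono (g := augmentation Q) Q.exact₀ S.f
  | succ n => exact Q.exact_succ n

lemma splicedComplex_d_comp_g (Q : ProjectiveResolution S.X₁) :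
    (splicedComplex S Q).d 1 0 ≫ S.g = 0 := by
  change (augmentation Q ≫ S.f) ≫ S.g = 0
  rw [Category.assoc, S.zero, comp_zero]

lemma exact_splicedComplex_d_g (hS : S.ShortExact) (Q : ProjectiveResolution S.X₁) :
    (ShortComplex.mk _ _ (splicedComplex_d_comp_g Q)).Exact :=
  exact_epi_comp hS.exact (augmentation Q)

/-- The projective resolution `⋯ ⟶ Q₁ ⟶ Q₀ ⟶ S.X₂` of `S.X₃` obtained by splicing a projective
resolution `Q` of `S.X₁` with a short exact sequence `S` whose middle term is projective. -/
def splicedResolution (hS : S.ShortExact) [Projective S.X₂] (Q : ProjectiveResolution S.X₁) :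
    ProjectiveResolution S.X₃ where
  complex := splicedComplex S Q
  projective
    | 0 => (inferInstance : Projective S.X₂)
    | n + 1 => (inferInstance : Projective (Q.complex.X n))
  hasHomology := inferInstance
  π := (ChainComplex.toSingle₀Equiv _ _).symm ⟨S.g, splicedComplex_d_comp_g Q⟩
  quasiIso := by
    refine ⟨fun n => ?_⟩
    cases n with
    | zero =>
      rw [ChainComplex.quasiIsoAt₀_iff, ShortComplex.quasiIso_iff_of_zeros' _ rfl rfl rfl]
      refine (ShortComplex.exact_and_epi_g_iff_of_iso ?_).1
        ⟨exact_splicedComplex_d_g hS Q, hS.epi_g⟩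
      exact ShortComplex.isoMk (Iso.refl _) (Iso.refl _) (Iso.refl _)
        ((Category.id_comp _).trans (Category.comp_id _).symm)
        ((Category.id_comp _).trans ((ChainComplex.toSingle₀Equiv_symm_apply_f_zero ..).trans
          (Category.comp_id _).symm))
    | succ n =>
      rw [quasiIsoAt_iff_exactAt' _ _ (ChainComplex.exactAt_succ_single_obj ..)]
      exact splicedComplex_exactAt_succ hS Q n

end SplicedResolution

section HomologyToSyzygy

variable {D : Type*} [Category* D] [Abelian D] {X Y : ChainComplex D ℕ} {K L : D}

/-- The map `H₁(X) ⟶ K` induced by a map `e : X₁ ⟶ K` which vanishes on boundaries. It is meant for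
a factorization `X₁ ⟶ K ⟶ X₀` of the differential through a syzygy `K`, namely a cokernel `e` of
`X₂ ⟶ X₁`: then `H₁(X)` is the kernel of `K ⟶ X₀`. -/
def homologyToSyzygy {e : X.X 1 ⟶ K} (w : X.d 2 1 ≫ e = 0) : X.homology 1 ⟶ K :=
  X.homologyι 1 ≫ X.descOpcycles e 2 (by simp) w

lemma homologyToSyzygy_naturality (φ : X ⟶ Y) {e : X.X 1 ⟶ K} {e' : Y.X 1 ⟶ L}
    (w : X.d 2 1 ≫ e = 0) (w' : Y.d 2 1 ≫ e' = 0) {a : K ⟶ L} (ha : φ.f 1 ≫ e' = e ≫ a) :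
    HomologicalComplex.homologyMap φ 1 ≫ homologyToSyzygy w' = homologyToSyzygy w ≫ a := by
  have h : HomologicalComplex.opcyclesMap φ 1 ≫ Y.descOpcycles e' 2 (by simp) w' =
      X.descOpcycles e 2 (by simp) w ≫ a := by
    simp [← cancel_epi (X.pOpcycles 1), ha]
  simp [homologyToSyzygy, h]

variable {e : X.X 1 ⟶ K} (w : X.d 2 1 ≫ e = 0)

lemma isIso_descOpcycles_of_exact [Epi e] (hw : (ShortComplex.mk _ _ w).Exact) :
    IsIso (X.descOpcycles e 2 (by simp) w) := by
  have hp := X.opcyclesIsCokernel 2 1 (by simp)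
  have h : X.descOpcycles e 2 (by simp) w =
      (hp.coconePointUniqueUpToIso hw.gIsCokernel).hom := by
    rw [← cancel_epi (X.pOpcycles 1), X.p_descOpcycles]
    exact (hp.comp_coconePointUniqueUpToIso_hom hw.gIsCokernel .one).symm
  rw [h]
  infer_instance

lemma mono_homologyToSyzygy [Epi e] (hw : (ShortComplex.mk _ _ w).Exact) :
    Mono (homologyToSyzygy w) := by
  have := isIso_descOpcycles_of_exact w hw
  exact mono_comp _ _

variable {f : K ⟶ X.X 0} (hf : e ≫ f = X.d 1 0)
include hf

lemma descOpcycles_comp : X.descOpcycles e 2 (by simp) w ≫ f = X.fromOpcycles 1 0 := by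
  rw [← cancel_epi (X.pOpcycles 1), X.p_descOpcycles_assoc, hf, X.p_fromOpcycles]

lemma homologyToSyzygy_comp : homologyToSyzygy w ≫ f = 0 := by
  rw [homologyToSyzygy, Category.assoc, descOpcycles_comp w hf, X.homologyι_comp_fromOpcycles]

lemma exact_homologyToSyzygy [Epi e] (hw : (ShortComplex.mk _ _ w).Exact) :
    (ShortComplex.mk _ _ (homologyToSyzygy_comp w hf)).Exact := by
  have := isIso_descOpcycles_of_exact w hw
  let φ : ShortComplex.mk _ _ (X.homologyι_comp_fromOpcycles 1 0) ⟶
      .mk _ _ (homologyToSyzygy_comp w hf) :=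
    { τ₁ := 𝟙 _
      τ₂ := X.descOpcycles e 2 (by simp) w
      τ₃ := 𝟙 _
      comm₁₂ := Category.id_comp _
      comm₂₃ := (descOpcycles_comp w hf).trans (Category.comp_id _).symm }
  exact (ShortComplex.exact_iff_of_epi_of_isIso_of_mono φ).1
    (ShortComplex.exact_of_f_is_kernel _ (X.homologyIsKernel 1 0 (by simp)))

end HomologyToSyzygy

section LeftDerived

variable {C D : Type*} [Category* C] [Abelian C] [Category* D] [Abelian D]
  {S : ShortComplex C} (F G : C ⥤ D) [F.Additive] [G.Additive] (hS : S.ShortExact)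
  [Projective S.X₂]

section

variable (Q : ProjectiveResolution S.X₁)

/-- The image under `F` of the augmentation `Q₀ ⟶ S.X₁`, where `Q₀` is viewed as the degree `1`
part of the spliced resolution of `S.X₃`. -/
def mapAugmentation :
    ((F.mapHomologicalComplex _).obj (splicedResolution hS Q).complex).X 1 ⟶ F.obj S.X₁ :=
  F.map (augmentation Q)

lemma d_comp_mapAugmentation :
    ((F.mapHomologicalComplex _).obj (splicedResolution hS Q).complex).d 2 1 ≫
      mapAugmentation F hS Q = 0 :=
  (F.map_comp _ _).symm.trans (congr(F.map $(d_comp_augmentation Q)).trans (F.map_zero _ _))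

variable [PreservesFiniteColimits F]

instance epi_mapAugmentation : Epi (mapAugmentation F hS Q) :=
  inferInstanceAs (Epi (F.map (augmentation Q)))

lemma exact_mapAugmentation :
    (ShortComplex.mk _ _ (d_comp_mapAugmentation F hS Q)).Exact :=
  ShortComplex.Exact.map_of_epi_of_preservesCokernel (S := .mk _ _ (d_comp_augmentation Q))
    Q.exact₀ F (epi_augmentation Q) inferInstance

end

variable [EnoughProjectives C]

/-- `ProjectiveResolution.isoLeftDerivedObj` with `HomologicalComplex.homology` in place of the
values of the homology functor. -/
def leftDerivedHomologyIso {Z : C} (P : ProjectiveResolution Z) (n : ℕ) :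
    (F.leftDerived n).obj Z ≅ ((F.mapHomologicalComplex _).obj P.complex).homology n :=
  P.isoLeftDerivedObj F n

variable {F G} in
lemma leftDerivedHomologyIso_hom_naturality (α : F ⟶ G) {Z : C} (P : ProjectiveResolution Z)
    (n : ℕ) :
    (NatTrans.leftDerived α n).app Z ≫ (leftDerivedHomologyIso G P n).hom =
      (leftDerivedHomologyIso F P n).hom ≫
        HomologicalComplex.homologyMap ((NatTrans.mapHomologicalComplex α _).app P.complex) n :=
  (Iso.eq_comp_inv _).1
    ((ProjectiveResolution.leftDerived_app_eq α P n).trans (Category.assoc ..).symm)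

/-- The connecting map `L₁F(S.X₃) ⟶ F(S.X₁)` of a short exact sequence `S` with projective middle
term, computed on the spliced resolution of `S.X₃`. -/
def leftDerivedConnecting : (F.leftDerived 1).obj S.X₃ ⟶ F.obj S.X₁ :=
  (leftDerivedHomologyIso F (splicedResolution hS (projectiveResolution S.X₁)) 1).hom ≫
    homologyToSyzygy (d_comp_mapAugmentation F hS (projectiveResolution S.X₁))

variable {F G} in
lemma leftDerivedConnecting_naturality (α : F ⟶ G) :
    (NatTrans.leftDerived α 1).app S.X₃ ≫ leftDerivedConnecting G hS =
      leftDerivedConnecting F hS ≫ α.app S.X₁ := by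
  let P := splicedResolution hS (projectiveResolution S.X₁)
  have h := homologyToSyzygy_naturality ((NatTrans.mapHomologicalComplex α _).app P.complex)
    (d_comp_mapAugmentation F hS _) (d_comp_mapAugmentation G hS _) (α.naturality _).symm
  rw [leftDerivedConnecting, leftDerivedConnecting, ← Category.assoc,
    leftDerivedHomologyIso_hom_naturality, Category.assoc, Category.assoc, h]

lemma leftDerivedConnecting_comp_map : leftDerivedConnecting F hS ≫ F.map S.f = 0 := by
  have h := homologyToSyzygy_comp (f := F.map S.f)
    (d_comp_mapAugmentation F hS (projectiveResolution S.X₁)) (F.map_comp _ _).symm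
  rw [leftDerivedConnecting, Category.assoc]
  exact congr(_ ≫ $h).trans comp_zero

variable [PreservesFiniteColimits F]

lemma mono_leftDerivedConnecting : Mono (leftDerivedConnecting F hS) := by
  have := mono_homologyToSyzygy _ (exact_mapAugmentation F hS (projectiveResolution S.X₁))
  exact mono_comp _ _

lemma exact_leftDerivedConnecting :
    (ShortComplex.mk _ _ (leftDerivedConnecting_comp_map F hS)).Exact :=
  exact_epi_comp (exact_homologyToSyzygy (f := F.map S.f) _ (F.map_comp _ _).symm
    (exact_mapAugmentation F hS (projectiveResolution S.X₁))) _

end LeftDerived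

section ExtConnecting

variable (A : Type*) {C : Type*} [Ring A] [Category* C] [Abelian C] [Linear A C]

instance preservesFiniteLimits_linearYoneda_obj (Y : C) :
    PreservesFiniteLimits ((linearYoneda A C).obj Y) where
  preservesFiniteLimits J _ _ :=
    have : PreservesLimitsOfShape J ((linearYoneda A C).obj Y ⋙ forget (ModuleCat A)) :=
      inferInstanceAs (PreservesLimitsOfShape J (yoneda.obj Y))
    preservesLimitsOfShape_of_reflects_of_preserves _ (forget (ModuleCat A))

instance preservesFiniteColimits_linearYoneda_obj_rightOp (Y : C) :
    PreservesFiniteColimits ((linearYoneda A C).obj Y).rightOp :=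
  preservesFiniteColimits_rightOp _

variable [EnoughProjectives C] {S : ShortComplex C} (hS : S.ShortExact) [Projective S.X₂]

/-- The connecting map `Hom(S.X₁, -) ⟶ Ext¹(S.X₃, -)` of a short exact sequence `S` with projective
middle term, which identifies `Ext¹(S.X₃, -)` with the cokernel of
`Hom(S.X₂, -) ⟶ Hom(S.X₁, -)`. -/
def extConnecting : (linearCoyoneda A C).obj (op S.X₁) ⟶ (Ext A C 1).obj (op S.X₃) where
  app Y := (leftDerivedConnecting ((linearYoneda A C).obj Y).rightOp hS).unop
  naturality _ _ φ := congr(Quiver.Hom.unop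
    $(leftDerivedConnecting_naturality hS (NatTrans.rightOp ((linearYoneda A C).map φ)))).symm

lemma map_comp_extConnecting : (linearCoyoneda A C).map S.f.op ≫ extConnecting A hS = 0 := by
  ext Y : 2
  exact congr(Quiver.Hom.unop
    $(leftDerivedConnecting_comp_map ((linearYoneda A C).obj Y).rightOp hS))

lemma exact_extConnecting : (ShortComplex.mk _ _ (map_comp_extConnecting A hS)).Exact :=
  exact_of_exact_evaluation fun Y =>
    (exact_leftDerivedConnecting ((linearYoneda A C).obj Y).rightOp hS).unop

instance epi_extConnecting : Epi (extConnecting A hS) := by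
  have (Y : C) : Epi ((extConnecting A hS).app Y) := by
    have := mono_leftDerivedConnecting ((linearYoneda A C).obj Y).rightOp hS
    exact unop_epi_of_mono (leftDerivedConnecting ((linearYoneda A C).obj Y).rightOp hS)
  exact NatTrans.epi_of_epi_app _

end ExtConnecting

section PreservesColimits

section

variable {I J C D : Type*} [Category* I] [Category* J] [Category* C] [Category* D]

lemma preservesColimitsOfShape_of_isColimit [HasColimitsOfShape I D] {F : I ⥤ C ⥤ D}
    [∀ i, PreservesColimitsOfShape J (F.obj i)] {c : Cocone F} (hc : IsColimit c) :
    PreservesColimitsOfShape J c.pt := by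
  have : PreservesColimitsOfShape J F.flip := ⟨⟨fun hd => ⟨evaluationJointlyReflectsColimits _
    fun i => isColimitOfPreserves (F.obj i) hd⟩⟩⟩
  exact preservesColimitsOfShape_of_natIso
    ((colimitIsoFlipCompColim F).symm ≪≫ (colimit.isColimit F).coconePointUniqueUpToIso hc)

lemma preservesColimitsOfShape_X₃_of_exact [Abelian D] {T : ShortComplex (C ⥤ D)} (hT : T.Exact)
    [Epi T.g] [PreservesColimitsOfShape J T.X₁] [PreservesColimitsOfShape J T.X₂] :
    PreservesColimitsOfShape J T.X₃ := by
  have (j : WalkingParallelPair) : PreservesColimitsOfShape J ((parallelPair T.f 0).obj j) := by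
    cases j <;> assumption
  exact preservesColimitsOfShape_of_isColimit hT.gIsCokernel

end

section

variable (A : Type*) [Ring A] (J : Type w) [SmallCategory J] [IsFiltered J]

instance reflectsColimitsOfShape_forget_moduleCat :
    ReflectsColimitsOfShape J (forget (ModuleCat.{w} A)) :=
  have : PreservesColimitsOfShape J (forget (ModuleCat.{w} A)) :=
    inferInstanceAs (PreservesColimitsOfShape J
      (forget₂ (ModuleCat.{w} A) AddCommGrpCat.{w} ⋙ forget AddCommGrpCat.{w}))
  reflectsColimitsOfShape_of_reflectsIsomorphisms

instance preservesColimitsOfShape_linearCoyoneda_obj {C : Type*} [Category.{w} C] [Preadditive C]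
    [Linear A C] (K : C) [hK : IsFinitelyPresentable.{w} K] :
    PreservesColimitsOfShape J ((linearCoyoneda A C).obj (op K)) := by
  have := isFinitelyPresentable_iff_preservesFilteredColimits.1 hK
  have : PreservesColimitsOfShape J ((linearCoyoneda A C).obj (op K) ⋙ forget (ModuleCat A)) :=
    (this.preserves_filtered_colimits J : PreservesColimitsOfShape J (coyoneda.obj (op K)))
  exact preservesColimitsOfShape_of_reflects_of_preserves _ (forget (ModuleCat A))

end

lemma preservesColimitsOfShape_ext_one (A : Type*) {C : Type*} [Ring A] [Category* C] [Abelian C]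
    [Linear A C] [EnoughProjectives C] {S : ShortComplex C} (hS : S.ShortExact) [Projective S.X₂]
    {L : C} {s : S.X₂ ⟶ L} {φ : L ⟶ S.X₂} (h : S.f ≫ s ≫ φ = S.f) (J : Type*) [Category* J]
    [PreservesColimitsOfShape J ((linearCoyoneda A C).obj (op S.X₁))]
    [PreservesColimitsOfShape J ((linearCoyoneda A C).obj (op L))] :
    PreservesColimitsOfShape J ((Ext A C 1).obj (op S.X₃)) := by
  let r : (linearCoyoneda A C).obj (op L) ⟶ (linearCoyoneda A C).obj (op S.X₁) :=
    (linearCoyoneda A C).map (S.f ≫ s).op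
  have hr : (linearCoyoneda A C).map φ.op ≫ r = (linearCoyoneda A C).map S.f.op := by
    rw [← Functor.map_comp, ← op_comp, Category.assoc, h]
  have hr' : r = (linearCoyoneda A C).map s.op ≫ (linearCoyoneda A C).map S.f.op :=
    (linearCoyoneda A C).map_comp s.op S.f.op
  have w : r ≫ extConnecting A hS = 0 := by
    rw [hr', Category.assoc, map_comp_extConnecting, comp_zero]
  exact preservesColimitsOfShape_X₃_of_exact (T := .mk _ _ w)
    (exact_of_exact_of_comp_eq (exact_extConnecting A hS) hr w)

end PreservesColimits

theorem fpOmega1_ext1_commutes_with_direct_limits_general (A : Type*) [Ring A] {S : Type u}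
    [Ring S] [Linear A (ModuleCat.{u} S)] {T : ShortComplex (ModuleCat.{u} S)}
    (hT : T.ShortExact) [hP : Projective T.X₂] [Module.FinitePresentation S T.X₁] :
    PreservesFilteredColimits ((Ext A (ModuleCat.{u} S) 1).obj (op T.X₃)) where
  preserves_filtered_colimits J _ _ := by
    have : Module.Projective S T.X₂ := (IsProjective.iff_projective T.X₂).2 hP
    obtain ⟨B, s, φ, hφ⟩ := exists_finsupp_factorization T.f.hom
    let L := (ModuleCat.free S).obj B
    let s' : T.X₂ ⟶ L := ModuleCat.ofHom s
    let φ' : L ⟶ T.X₂ := ModuleCat.ofHom φ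
    have h : T.f ≫ s' ≫ φ' = T.f := ModuleCat.hom_ext hφ
    have := isFinitelyPresentable_of_finitePresentation T.X₁
    have : IsFinitelyPresentable.{u} L := isFinitelyPresentable_free_obj B
    exact preservesColimitsOfShape_ext_one A hT h J

theorem fpOmega1_ext1_commutes_with_direct_limits (R : Type) [Ring R] (M : RMod R)
    (h : IsOmega1 R (fun K => Module.FinitePresentation Rᵐᵒᵖ K) M) :
    CommutesWithDirectLimits R M := by
  obtain ⟨K, P, i, p, w, _, _, hexact, _, (_ : Module.FinitePresentation Rᵐᵒᵖ K)⟩ := h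
  intro J _ _ _
  have := fpOmega1_ext1_commutes_with_direct_limits_general ℤ (T := .mk i p w) ⟨hexact⟩
  exact this.preserves_filtered_colimits J
end
end
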